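/- Let n and r be positive integers such that gcd(q, nr) = 1. Let C be a nonzero cyclic code in A_q(r) with d*(C) = δ > 1 and let α = (α_1, α_2) ∈ U_n × R(C), where R(C) is the set of optimized roots of C. Then the abelian code C_n in A_q(n,r) with defining set D_α(C_n) = Z_n × D_{α_2}(C) satisfies d*(C_n) = δ and dim_{F_q}(C_n) = n·dim_{F_q}(C). -/

import Mathlib

open Classical

noncomputable section

namespace AbelianCodes

/-- The index set `I = Z_{r 0} × ⋯ × Z_{r (s-1)}`. -/
abbrev Idx {s : ℕ} (r : Fin s → ℕ) : Type := ∀ k, ZMod (r k)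

variable {F : Type*} [Field F]

/-- The support of a hypermatrix. -/
def hsupp {s : ℕ} {r : Fin s → ℕ} (M : Idx r → F) : Set (Idx r) := {i | M i ≠ 0}

/-- The hypercolumn `H_M(k,b)` of a hypermatrix, viewed as an `(s-1)`-dimensional
hypermatrix indexed by `∏_{j ≠ k} Z_{r j}`. -/
def hypercol {s : ℕ} {r : Fin (s+1) → ℕ} (M : Idx r → F) (k : Fin (s+1)) (b : ZMod (r k)) :
    Idx (fun j => r (k.succAbove j)) → F :=
  fun i => M (k.insertNth b i)

/-- `ω_M(k,b)`: the number of consecutive zero hypercolumns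
`H_M(k,b+1), H_M(k,b+2), …` (indices modulo `r k`). -/
def runLen {s : ℕ} {r : Fin (s+1) → ℕ} (M : Idx r → F) (k : Fin (s+1)) (b : ZMod (r k)) : ℕ :=
  ((Finset.Ico 1 (r k)).filter
    (fun j => ∀ m : ℕ, m ∈ Finset.Icc 1 j → hypercol M k (b + (m : ZMod (r k))) = 0)).card

/-- The apparent distance `d*(M)` of a hypermatrix, defined recursively on the
number of variables.  (A `0`-dimensional hypermatrix is a scalar, of apparent
distance `1` if nonzero and `0` otherwise; with this convention the `1`-dimensional
case becomes `max {ω_M(b)+1 : a_b ≠ 0}` and the higher-dimensional case becomes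
`max_k max {(ω_M(k,b)+1)·d*(H_M(k,b)) : H_M(k,b) ≠ 0}`, since zero hypermatrices
have apparent distance `0`.) -/
def apd : {s : ℕ} → (r : Fin s → ℕ) → (Idx r → F) → ℕ
  | 0, _, M => if M finZeroElim = 0 then 0 else 1
  | _+1, r, M =>
      Finset.univ.sup fun k =>
        Finset.univ.sup fun b : Fin (r k) =>
          (runLen M k ((b : ℕ) : ZMod (r k)) + 1) *
            apd (fun j => r (k.succAbove j)) (hypercol M k ((b : ℕ) : ZMod (r k)))

/-- The `q^t`-orbit `Q_t(a)` of `a ∈ I`. -/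
def qOrbit {s : ℕ} (r : Fin s → ℕ) (q t : ℕ) (a : Idx r) : Set (Idx r) :=
  {i | ∃ n : ℕ, ∀ k, i k = (q : ZMod (r k)) ^ (t * n) * a k}

/-- `D` is a union of `q^t`-orbits. -/
def OrbitUnion {s : ℕ} (r : Fin s → ℕ) (q t : ℕ) (D : Set (Idx r)) : Prop :=
  ∀ a ∈ D, qOrbit r q t a ⊆ D

/-- The hypermatrix afforded by `D ⊆ I`: entry `0` at indices in `D`, entry `1` elsewhere. -/
def afforded {s : ℕ} (r : Fin s → ℕ) (D : Set (Idx r)) : Idx r → F :=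
  fun i => if i ∈ D then 0 else 1

/-- `M` is a `q^t`-orbits hypermatrix, i.e. the hypermatrix afforded by some union
of `q^t`-orbits. -/
def IsOrbitMx {s : ℕ} (r : Fin s → ℕ) (q t : ℕ) (M : Idx r → F) : Prop :=
  ∃ D : Set (Idx r), OrbitUnion r q t D ∧ M = afforded r D

/-- The minimum apparent distance `mad(M) = min {d*(P) : P a q^t-orbits hypermatrix,
`0 ≠ P ≤ M`}`, where `P ≤ M` means `supp P ⊆ supp M`. -/
def mad {s : ℕ} (r : Fin s → ℕ) (q t : ℕ) (M : Idx r → F) : ℕ :=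
  sInf {d | ∃ P : Idx r → F, IsOrbitMx r q t P ∧ P ≠ 0 ∧ hsupp P ⊆ hsupp M ∧ apd r P = d}

/-- The `q^t`-cyclotomic coset of `b` modulo `r`. -/
def cycCoset (r q t : ℕ) (b : ZMod r) : Set (ZMod r) :=
  {x | ∃ n : ℕ, x = (q : ZMod r) ^ (t * n) * b}



variable {F : Type*} [Field F] {L : Type*} [Field L] [Algebra F L]

/-- An abelian code: a subspace of the group algebra `F[∏ Z_{r k}]` (identified
with the space of coefficient functions `I → F`) which is closed under all
translations, i.e. an ideal. -/
def IsAbelianCode {s : ℕ} {r : Fin s → ℕ} (C : Submodule F (Idx r → F)) : Prop :=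
  ∀ f ∈ C, ∀ a : Idx r, (fun i => f (i - a)) ∈ C

/-- Convolution: the multiplication of the group algebra in the coefficient
function picture. -/
def conv {s : ℕ} {r : Fin s → ℕ} [∀ k, NeZero (r k)] (f g : Idx r → F) : Idx r → F :=
  fun i => ∑ u : Idx r, f u * g (i - u)

/-- The (discrete) Fourier transform `φ_{α,f}(j) = f(α^j)` of a coefficient
function `f : I → F` with respect to `α`, with values in the extension `L`. -/
def fourier {s : ℕ} {r : Fin s → ℕ} [∀ k, NeZero (r k)] (α : Fin s → L) (f : Idx r → F) :
    Idx r → L :=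
  fun j => ∑ i : Idx r, algebraMap F L (f i) * ∏ k, α k ^ ((i k).val * (j k).val)

/-- The Hamming weight of a codeword. -/
def wt {s : ℕ} {r : Fin s → ℕ} [∀ k, NeZero (r k)] (f : Idx r → F) : ℕ :=
  (Finset.univ.filter fun i : Idx r => f i ≠ 0).card

/-- The minimum distance of a code. -/
def dmin {s : ℕ} {r : Fin s → ℕ} [∀ k, NeZero (r k)] (C : Submodule F (Idx r → F)) : ℕ :=
  sInf {w | ∃ f ∈ C, f ≠ (0 : Idx r → F) ∧ wt f = w}

/-- The defining set `D_α(C) = {a ∈ I : f(α^a) = 0 for all f ∈ C}`. -/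
def defSet {s : ℕ} (r : Fin s → ℕ) [∀ k, NeZero (r k)] (α : Fin s → L)
    (C : Submodule F (Idx r → F)) : Set (Idx r) :=
  {a | ∀ f ∈ C, fourier α f a = 0}

/-- The apparent distance of a code `C` with respect to `α`:
`d_α*(C) = min {d*(M(φ_{α,e})) : 0 ≠ e = e² ∈ C}`. -/
def dStarAlpha {s : ℕ} (r : Fin s → ℕ) [∀ k, NeZero (r k)] (α : Fin s → L)
    (C : Submodule F (Idx r → F)) : ℕ :=
  sInf {d | ∃ e, e ∈ C ∧ e ≠ (0 : Idx r → F) ∧ conv e e = e ∧ apd r (fourier α e) = d}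

/-- The apparent distance of a code: `d*(C) = max {d_β*(C) : β ∈ U}`, where `U`
is the set of tuples of primitive roots of unity in `L`. -/
def dStarCode {s : ℕ} (r : Fin s → ℕ) [∀ k, NeZero (r k)] (L : Type*) [Field L] [Algebra F L]
    (C : Submodule F (Idx r → F)) : ℕ :=
  sSup {d | ∃ α : Fin s → L, (∀ k, IsPrimitiveRoot (α k) (r k)) ∧ dStarAlpha r α C = d}

/-- The defining set of the multivariate BCH code `B_q(α,γ,δ,b)`:
`∪_{k∈γ} ∪_{l=0}^{δ_k−2} ∪_{i ∈ I(k, b_k+l)} Q(i)`. -/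
def bchDefSet {s : ℕ} (r : Fin s → ℕ) (q : ℕ) (γ : Finset (Fin s)) (δ b : Fin s → ℕ) :
    Set (Idx r) :=
  ⋃ k ∈ γ, ⋃ l ∈ Finset.range (δ k - 1),
    ⋃ i ∈ {i : Idx r | i k = ((b k + l : ℕ) : ZMod (r k))}, qOrbit r q 1 i



/-- The character pairing. -/
def chi {s : ℕ} {r : Fin s → ℕ} (α : Fin s → L) (i j : Idx r) : L :=
  ∏ k, α k ^ ((i k).val * (j k).val)

lemma chi_comm {s : ℕ} {r : Fin s → ℕ} (α : Fin s → L) (i j : Idx r) :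
    chi α i j = chi α j i := by
  unfold chi; exact Finset.prod_congr rfl fun k _ => by rw [mul_comm]

lemma pow_val_add {m : ℕ} [NeZero m] {a : L} (ha : a ^ m = 1) (x y z : ZMod m) :
    a ^ ((x + y).val * z.val) = a ^ (x.val * z.val) * a ^ (y.val * z.val) := by
  rw [ZMod.val_add, ← pow_add, ← add_mul, pow_mul, pow_mul]
  congr 1
  exact (pow_eq_pow_mod _ ha).symm

lemma chi_add {s : ℕ} {r : Fin s → ℕ} [∀ k, NeZero (r k)] {α : Fin s → L}
    (hα : ∀ k, IsPrimitiveRoot (α k) (r k)) (i a j : Idx r) :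
    chi α (i + a) j = chi α i j * chi α a j := by
  unfold chi
  rw [← Finset.prod_mul_distrib]
  exact Finset.prod_congr rfl fun k _ => pow_val_add (hα k).pow_eq_one _ _ _

lemma chi_zero {s : ℕ} {r : Fin s → ℕ} [∀ k, NeZero (r k)] (α : Fin s → L) (j : Idx r) :
    chi α 0 j = 1 := by
  unfold chi; simp

lemma chi_sum {s : ℕ} {r : Fin s → ℕ} [∀ k, NeZero (r k)] {α : Fin s → L}
    (hα : ∀ k, IsPrimitiveRoot (α k) (r k)) (j : Idx r) :
    ∑ i, chi α i j = if j = 0 then (Fintype.card (Idx r) : L) else 0 := by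
  split_ifs with h
  · subst h
    simp [chi_comm α _ 0, chi_zero]
  · obtain ⟨k, hk⟩ : ∃ k, j k ≠ 0 := by
      by_contra hh; push Not at hh; exact h (funext hh)
    have hr : 1 < r k := by
      have := NeZero.pos (r k)
      by_contra hh
      have h1 : r k = 1 := by omega
      apply hk
      have := ZMod.val_lt (j k)
      rw [← ZMod.val_eq_zero]; omega
    have : chi α (Pi.single k 1) j ≠ 1 := by
      have e : chi α (Pi.single k 1) j = α k ^ (j k).val := by
        unfold chi
        rw [Finset.prod_eq_single k]
        · have : Fact (1 < r k) := ⟨hr⟩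
          simp [ZMod.val_one]
        · intro b _ hb
          simp [Pi.single_eq_of_ne hb]
        · simp
      rw [e]
      intro h1
      have := ((hα k).pow_eq_one_iff_dvd _).1 h1
      have h2 := Nat.eq_zero_of_dvd_of_lt this (ZMod.val_lt _)
      exact hk ((ZMod.val_eq_zero _).1 h2)
    have h2 : ∑ i, chi α i j = (∑ i, chi α i j) * chi α (Pi.single k 1) j := by
      rw [Finset.sum_mul]
      simp_rw [← chi_add hα]
      exact (Equiv.sum_comp (Equiv.addRight (Pi.single k 1)) (fun i => chi α i j)).symm
    by_contra h3
    apply this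
    exact (mul_left_cancel₀ h3 (by rw [← h2, mul_one])).symm.symm

lemma fourier_eq {s : ℕ} {r : Fin s → ℕ} [∀ k, NeZero (r k)] (α : Fin s → L) (f : Idx r → F)
    (j : Idx r) : fourier α f j = ∑ i, algebraMap F L (f i) * chi α i j := rfl

/-- inverse transform -/
def invF {s : ℕ} {r : Fin s → ℕ} [∀ k, NeZero (r k)] (α : Fin s → L) (g : Idx r → L) : Idx r → L :=
  fun i => (Fintype.card (Idx r) : L)⁻¹ * ∑ j, g j * chi α (-i) j

lemma chi_neg {s : ℕ} {r : Fin s → ℕ} [∀ k, NeZero (r k)] {α : Fin s → L}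
    (hα : ∀ k, IsPrimitiveRoot (α k) (r k)) (i j : Idx r) : chi α (-i) j = chi α i (-j) := by
  have h1 : chi α i j * chi α (-i) j = 1 := by
    rw [← chi_add hα, add_neg_cancel, chi_zero]
  have h2 : chi α i j * chi α i (-j) = 1 := by
    rw [chi_comm α i j, chi_comm α i (-j), ← chi_add hα, add_neg_cancel, chi_zero]
  have h3 : chi α i j ≠ 0 := left_ne_zero_of_mul_eq_one h1
  exact mul_left_cancel₀ h3 (h1.trans h2.symm)

lemma chi_orth {s : ℕ} {r : Fin s → ℕ} [∀ k, NeZero (r k)] {α : Fin s → L}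
    (hα : ∀ k, IsPrimitiveRoot (α k) (r k)) (i j : Idx r) :
    ∑ a, chi α (-a) i * chi α a j = if j = i then (Fintype.card (Idx r) : L) else 0 := by
  have : ∀ a, chi α (-a) i * chi α a j = chi α a (j - i) := by
    intro a
    rw [chi_neg hα, chi_comm, chi_comm α a j, ← chi_add hα, chi_comm, neg_add_eq_sub]
  simp_rw [this, chi_sum hα, sub_eq_zero]

lemma fourier_invF {s : ℕ} {r : Fin s → ℕ} [∀ k, NeZero (r k)] {α : Fin s → L}
    (hα : ∀ k, IsPrimitiveRoot (α k) (r k)) (hN : (Fintype.card (Idx r) : L) ≠ 0)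
    (g : Idx r → L) : fourier (F := L) α (invF α g) = g := by
  funext j
  rw [fourier_eq]
  simp only [Algebra.algebraMap_self, RingHom.id_apply, invF]
  simp_rw [mul_assoc, ← Finset.mul_sum, Finset.sum_mul]
  rw [Finset.sum_comm]
  simp_rw [mul_assoc, ← Finset.mul_sum, chi_orth hα]
  have : (Fintype.card (Idx r) : L)⁻¹ * (g j * (Fintype.card (Idx r) : L)) = g j := by
    field_simp
  simpa only [mul_ite, mul_zero, Finset.sum_ite_eq, Finset.mem_univ, if_true] using this

/-- linear Fourier transform over L -/
def fourL {s : ℕ} {r : Fin s → ℕ} [∀ k, NeZero (r k)] (α : Fin s → L) :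
    (Idx r → L) →ₗ[L] (Idx r → L) where
  toFun g := fourier (F := L) α g
  map_add' f g := by
    funext j; simp [fourier_eq, add_mul, Finset.sum_add_distrib]
  map_smul' c f := by
    funext j; simp [fourier_eq, Finset.mul_sum, mul_assoc]

lemma fourier_eq_fourL {s : ℕ} {r : Fin s → ℕ} [∀ k, NeZero (r k)] (α : Fin s → L)
    (f : Idx r → F) : fourier α f = fourL α (algebraMap F L ∘ f) := by
  funext j; simp [fourL, fourier_eq]

lemma fourL_inj {s : ℕ} {r : Fin s → ℕ} [∀ k, NeZero (r k)] {α : Fin s → L}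
    (hα : ∀ k, IsPrimitiveRoot (α k) (r k)) (hN : (Fintype.card (Idx r) : L) ≠ 0) :
    Function.Injective (fourL (r := r) α) := by
  apply LinearMap.injective_iff_surjective.2
  exact fun g => ⟨invF α g, fourier_invF hα hN g⟩

lemma fourier_inj {s : ℕ} {r : Fin s → ℕ} [∀ k, NeZero (r k)] {α : Fin s → L}
    (hα : ∀ k, IsPrimitiveRoot (α k) (r k)) (hN : (Fintype.card (Idx r) : L) ≠ 0)
    {f g : Idx r → F} (h : fourier α f = fourier α g) : f = g := by
  rw [fourier_eq_fourL, fourier_eq_fourL] at h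
  have := fourL_inj hα hN h
  funext i
  exact (algebraMap F L).injective (congrFun this i)

lemma fourier_shift {s : ℕ} {r : Fin s → ℕ} [∀ k, NeZero (r k)] {α : Fin s → L}
    (hα : ∀ k, IsPrimitiveRoot (α k) (r k)) (f : Idx r → F) (a j : Idx r) :
    fourier α (fun i => f (i - a)) j = chi α a j * fourier α f j := by
  rw [fourier_eq, fourier_eq, ← Equiv.sum_comp (Equiv.addRight a)]
  simp only [Equiv.coe_addRight, add_sub_cancel_right, Finset.mul_sum, chi_add hα]
  exact Finset.sum_congr rfl fun i _ => by ring

lemma fourier_conv {s : ℕ} {r : Fin s → ℕ} [∀ k, NeZero (r k)] {α : Fin s → L}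
    (hα : ∀ k, IsPrimitiveRoot (α k) (r k)) (f g : Idx r → F) (j : Idx r) :
    fourier α (conv f g) j = fourier α f j * fourier α g j := by
  have h : ∀ u, fourier α (fun i => g (i - u)) j = chi α u j * fourier α g j :=
    fun u => fourier_shift hα g u j
  simp only [fourier_eq] at h ⊢
  simp only [conv, map_sum, map_mul, Finset.sum_mul _ _ (chi α _ _)]
  rw [Finset.sum_comm]
  simp_rw [mul_assoc, ← Finset.mul_sum, h, ← mul_assoc, ← Finset.sum_mul]

lemma finrank_code {s : ℕ} {r : Fin s → ℕ} [∀ k, NeZero (r k)] {α : Fin s → L}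
    (hα : ∀ k, IsPrimitiveRoot (α k) (r k)) (hN : (Fintype.card (Idx r) : L) ≠ 0)
    (C : Submodule F (Idx r → F)) (hC : IsAbelianCode C) :
    Module.finrank F C = Nat.card {j // j ∉ defSet r α C} := by
  let b := Module.finBasis F C
  let v : Fin (Module.finrank F C) → (Idx r → L) := fun i => fourier α (b i : Idx r → F)
  have hv : LinearIndependent L v := by
    have h1 : LinearIndependent F (fun i => (b i : Idx r → F)) :=
      b.linearIndependent.map' C.subtype (by simp)
    have h2 : LinearIndependent L (fun i => algebraMap F L ∘ (b i : Idx r → F)) :=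
      linearIndependent_algebraMap_comp_iff.2 h1
    have h3 := h2.map' (fourL (r := r) α) (LinearMap.ker_eq_bot.2 (fourL_inj hα hN))
    have e : v = (fourL (r := r) α ∘ fun i => algebraMap F L ∘ (b i : Idx r → F)) := by
      funext i
      exact fourier_eq_fourL α _
    rw [e]
    exact h3
  let w : {j // j ∉ defSet r α C} → (Idx r → L) := fun j => Pi.single j.1 1
  have hw : LinearIndependent L w := by
    have := (Pi.basisFun L (Idx r)).linearIndependent.comp
      (Subtype.val : {j // j ∉ defSet r α C} → Idx r) Subtype.val_injective
    convert this using 1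
    funext j
    simp [w]
  have hmem : ∀ f ∈ C, fourier α f ∈ Submodule.span L (Set.range v) := by
    intro f hf
    have : f = ∑ i, b.repr ⟨f, hf⟩ i • (b i : Idx r → F) := by
      have := congrArg (C.subtype) (b.sum_repr ⟨f, hf⟩)
      rw [map_sum] at this
      exact this.symm
    have e : fourier α f = ∑ i, algebraMap F L (b.repr ⟨f, hf⟩ i) • v i := by
      conv_lhs => rw [this]
      have e2 : (algebraMap F L ∘ ∑ i, b.repr ⟨f, hf⟩ i • (b i : Idx r → F)) =
          ∑ i, algebraMap F L (b.repr ⟨f, hf⟩ i) • (algebraMap F L ∘ (b i : Idx r → F)) := by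
        funext x; simp [Algebra.smul_def]
      rw [fourier_eq_fourL, e2, map_sum]
      refine Finset.sum_congr rfl fun i _ => ?_
      rw [map_smul, ← fourier_eq_fourL]
    rw [e]
    exact Submodule.sum_mem _ fun i _ =>
      Submodule.smul_mem _ _ (Submodule.subset_span ⟨i, rfl⟩)
  have hspan : Submodule.span L (Set.range v) = Submodule.span L (Set.range w) := by
    apply le_antisymm
    · rw [Submodule.span_le]
      rintro _ ⟨i, rfl⟩
      have : v i = ∑ j : {j // j ∉ defSet r α C}, v i j • w j := by
        funext x
        simp only [Finset.sum_apply, Pi.smul_apply, smul_eq_mul, w, Pi.single_apply]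
        by_cases hx : x ∈ defSet r α C
        · rw [Finset.sum_eq_zero]
          · exact hx _ (b i).2
          · intro j _
            rw [if_neg, mul_zero]
            rintro rfl
            exact j.2 hx
        · rw [Finset.sum_eq_single ⟨x, hx⟩]
          · simp
          · intro j _ hj
            rw [if_neg, mul_zero]
            rintro rfl
            exact hj rfl
          · simp
      rw [this]
      exact Submodule.sum_mem _ fun j _ =>
        Submodule.smul_mem _ _ (Submodule.subset_span ⟨j, rfl⟩)
    · rw [Submodule.span_le]
      rintro _ ⟨⟨j, hj⟩, rfl⟩
      obtain ⟨f, hf, hfj⟩ : ∃ f ∈ C, fourier α f j ≠ 0 := by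
        simpa [defSet] using hj
      have : w ⟨j, hj⟩ = ((Fintype.card (Idx r) : L)⁻¹ * (fourier α f j)⁻¹) •
          ∑ a, chi α (-a) j • fourier α (fun i => f (i - a)) := by
        funext x
        simp only [Finset.sum_apply, Pi.smul_apply, smul_eq_mul, w, Pi.single_apply,
          fourier_shift hα, ← mul_assoc, ← Finset.sum_mul, chi_orth hα]
        by_cases hx : x = j
        · subst hx
          simp only [if_true]
          field_simp
        · simp [hx]
      rw [this]
      exact Submodule.smul_mem _ _ (Submodule.sum_mem _ fun a _ =>
        Submodule.smul_mem _ _ (hmem _ (hC f hf a)))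
  have h1 := finrank_span_eq_card hv
  have h2 := finrank_span_eq_card hw
  rw [hspan, h2] at h1
  rw [Nat.card_eq_fintype_card, h1, Fintype.card_fin]

lemma mem_code_iff {s : ℕ} {r : Fin s → ℕ} [∀ k, NeZero (r k)] {α : Fin s → L}
    (hα : ∀ k, IsPrimitiveRoot (α k) (r k)) (hN : (Fintype.card (Idx r) : L) ≠ 0)
    (C : Submodule F (Idx r → F)) (hC : IsAbelianCode C) (f : Idx r → F)
    (hf : ∀ j ∈ defSet r α C, fourier α f j = 0) : f ∈ C := by
  let C' : Submodule F (Idx r → F) :=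
    { carrier := {f | ∀ j ∈ defSet r α C, fourier α f j = 0}
      add_mem' := by
        intro f g hf hg j hj
        have h1 := hf j hj
        have h2 := hg j hj
        rw [fourier_eq] at h1 h2 ⊢
        simp [add_mul, Finset.sum_add_distrib, h1, h2]
      zero_mem' := by
        intro j hj
        simp [fourier_eq]
      smul_mem' := by
        intro c f hf j hj
        have h1 := hf j hj
        rw [fourier_eq] at h1 ⊢
        simp [mul_assoc, ← Finset.mul_sum, h1] }
  have hC' : IsAbelianCode C' := by
    intro f hf a j hj
    rw [fourier_shift hα, hf j hj, mul_zero]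
  have hle : C ≤ C' := fun f hf j hj => hj f hf
  have hD : defSet r α C' = defSet r α C := by
    apply Set.Subset.antisymm
    · intro j hj f hf
      exact hj f (hle hf)
    · intro j hj f hf
      exact hf j hj
  have : C = C' := by
    apply Submodule.eq_of_le_of_finrank_eq hle
    rw [finrank_code hα hN C hC, finrank_code hα hN C' hC', hD]
  rw [this]
  exact hf

lemma exists_of_pow_card {F L : Type*} [Field F] [Fintype F] [Field L] [Algebra F L] (x : L)
    (hx : x ^ Fintype.card F = x) : ∃ y : F, algebraMap F L y = x := by
  have h0 : (Polynomial.X ^ Fintype.card F - Polynomial.X : Polynomial L) ≠ 0 :=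
    FiniteField.X_pow_card_sub_X_ne_zero L Fintype.one_lt_card
  have hd : (Polynomial.X ^ Fintype.card F - Polynomial.X : Polynomial L).natDegree = Fintype.card F :=
    FiniteField.X_pow_card_sub_X_natDegree_eq L Fintype.one_lt_card
  set p := (Polynomial.X ^ Fintype.card F - Polynomial.X : Polynomial L) with hp
  have hsub : Finset.univ.image (algebraMap F L) ⊆ p.roots.toFinset := by
    intro z hz
    obtain ⟨y, -, rfl⟩ := Finset.mem_image.1 hz
    rw [Multiset.mem_toFinset, Polynomial.mem_roots h0]
    simp [hp, ← map_pow, FiniteField.pow_card]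
  have hcard : p.roots.toFinset.card ≤ (Finset.univ.image (algebraMap F L)).card := by
    rw [Finset.card_image_of_injective _ (algebraMap F L).injective, Finset.card_univ]
    exact (Multiset.toFinset_card_le _).trans ((Polynomial.card_roots' p).trans hd.le)
  have heq := Finset.eq_of_subset_of_card_le hsub hcard
  have : x ∈ p.roots.toFinset := by
    rw [Multiset.mem_toFinset, Polynomial.mem_roots h0]
    simp [hp, hx]
  rw [← heq] at this
  obtain ⟨y, -, hy⟩ := Finset.mem_image.1 this
  exact ⟨y, hy⟩

lemma card_filter_congr' {p q : ℕ → Prop} (ip : DecidablePred p) (iq : DecidablePred q)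
    (s : Finset ℕ) (h : ∀ j, p j ↔ q j) :
    (@Finset.filter ℕ p ip s).card = (@Finset.filter ℕ q iq s).card := by
  obtain rfl : p = q := funext fun j => propext (h j)
  congr

lemma card_filter_zero' {p : ℕ → Prop} (ip : DecidablePred p)
    (s : Finset ℕ) (h : ∀ j ∈ s, ¬ p j) :
    (@Finset.filter ℕ p ip s).card = 0 := by
  rw [Finset.card_eq_zero, Finset.filter_eq_empty_iff]
  exact h

lemma card_ne {s : ℕ} {r : Fin s → ℕ} [∀ k, NeZero (r k)] {α : Fin s → L}
    (hα : ∀ k, IsPrimitiveRoot (α k) (r k)) : (Fintype.card (Idx r) : L) ≠ 0 := by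
  have h : Fintype.card (Idx r) = ∏ k, r k := by
    rw [Fintype.card_pi]
    exact Finset.prod_congr rfl fun k _ => ZMod.card _
  rw [h, Nat.cast_prod, Finset.prod_ne_zero_iff]
  intro k _
  exact (hα k).neZero'.out

lemma chi_nsmul {s : ℕ} {r : Fin s → ℕ} [∀ k, NeZero (r k)] {α : Fin s → L}
    (hα : ∀ k, IsPrimitiveRoot (α k) (r k)) (i j : Idx r) (m : ℕ) :
    chi α i (m • j) = chi α i j ^ m := by
  induction m with
  | zero => rw [zero_smul, chi_comm, chi_zero, pow_zero]
  | succ m ih => rw [succ_nsmul, chi_comm, chi_add hα, chi_comm, ih, chi_comm α j, pow_succ]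

lemma fourier_frob [Fintype F] {s : ℕ} {r : Fin s → ℕ} [∀ k, NeZero (r k)] {α : Fin s → L}
    (hα : ∀ k, IsPrimitiveRoot (α k) (r k)) (f : Idx r → F) (j : Idx r) :
    fourier α f (Fintype.card F • j) = fourier α f j ^ Fintype.card F := by
  have h : ∀ x : L, x ^ Fintype.card F = FiniteField.frobeniusAlgHom F L x := fun x => by
    simp
  rw [h, fourier_eq, fourier_eq, map_sum]
  refine Finset.sum_congr rfl fun i _ => ?_
  rw [map_mul, AlgHom.commutes, ← h, chi_nsmul hα]

lemma exists_idem [Fintype F] {s : ℕ} {r : Fin s → ℕ} [∀ k, NeZero (r k)] {α : Fin s → L}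
    (hα : ∀ k, IsPrimitiveRoot (α k) (r k)) (hcop : ∀ k, (Fintype.card F).Coprime (r k))
    (P : Set (Idx r)) (hP : ∀ j ∈ P, Fintype.card F • j ∈ P) :
    ∃ e : Idx r → F, conv e e = e ∧ ∀ j, fourier α e j = if j ∈ P then 1 else 0 := by
  have hN := card_ne hα
  have h : ∀ x : L, x ^ Fintype.card F = FiniteField.frobeniusAlgHom F L x := fun x => by
    simp
  have hinj : Function.Injective (fun j : Idx r => Fintype.card F • j) := by
    intro a b hab
    funext k
    have hk := congrFun hab k
    simp only [Pi.smul_apply, nsmul_eq_mul] at hk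
    have hu : IsUnit ((Fintype.card F : ℕ) : ZMod (r k)) := (ZMod.isUnit_iff_coprime _ _).2 (hcop k)
    exact hu.mul_left_cancel hk
  set S : Finset (Idx r) := Finset.univ.filter (· ∈ P) with hS
  have himg : S.image (fun j : Idx r => Fintype.card F • j) = S := by
    apply Finset.eq_of_subset_of_card_le
    · intro x hx
      obtain ⟨y, hy, rfl⟩ := Finset.mem_image.1 hx
      simp only [hS, Finset.mem_filter, Finset.mem_univ, true_and] at hy ⊢
      exact hP _ hy
    · rw [Finset.card_image_of_injective _ hinj]
  set g : Idx r → L := fun j => if j ∈ P then 1 else 0 with hg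
  have hinv : ∀ i, invF α g i = (Fintype.card (Idx r) : L)⁻¹ * ∑ j ∈ S, chi α (-i) j := by
    intro i
    simp only [invF, hg, hS, Finset.sum_filter, ite_mul, one_mul, zero_mul]
  have hex : ∀ i, ∃ y : F, algebraMap F L y = invF α g i := by
    intro i
    apply exists_of_pow_card
    rw [h, hinv, map_mul, map_inv₀, map_natCast, map_sum]
    congr 1
    conv_rhs => rw [← himg, Finset.sum_image (fun a _ b _ hab => hinj hab)]
    refine Finset.sum_congr rfl fun j _ => ?_
    rw [← h, chi_nsmul hα]
  choose e he using hex
  have hf : ∀ j, fourier α e j = if j ∈ P then 1 else 0 := by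
    intro j
    have h1 : algebraMap F L ∘ e = invF α g := funext he
    rw [fourier_eq_fourL, h1]
    exact congrFun (fourier_invF hα hN g) j
  refine ⟨e, ?_, hf⟩
  apply fourier_inj hα hN
  funext j
  rw [fourier_conv hα, hf]
  split_ifs <;> simp

lemma apd_zero {s : ℕ} (r : Fin s → ℕ) : apd r (0 : Idx r → L) = 0 := by
  induction s with
  | zero => simp [apd]
  | succ s ih =>
    simp only [apd]
    apply Nat.le_zero.1
    refine Finset.sup_le fun k _ => Finset.sup_le fun b _ => ?_
    have : hypercol (0 : Idx r → L) k ((b : ℕ) : ZMod (r k)) = 0 := rfl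
    rw [this, ih, mul_zero]

lemma le_apd {s : ℕ} (r : Fin (s+1) → ℕ) [∀ k, NeZero (r k)] (M : Idx r → L) (k : Fin (s+1))
    (b : ZMod (r k)) :
    (runLen M k b + 1) * apd (fun j => r (k.succAbove j)) (hypercol M k b) ≤ apd r M := by
  have hb : ((⟨b.val, ZMod.val_lt b⟩ : Fin (r k)) : ℕ) = b.val := rfl
  rw [apd]
  refine le_trans ?_ (Finset.le_sup (f := fun k => Finset.univ.sup fun b : Fin (r k) =>
          (runLen M k ((b : ℕ) : ZMod (r k)) + 1) *
            apd (fun j => r (k.succAbove j)) (hypercol M k ((b : ℕ) : ZMod (r k)))) (Finset.mem_univ k))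
  refine le_trans ?_ (Finset.le_sup (f := fun b : Fin (r k) =>
          (runLen M k ((b : ℕ) : ZMod (r k)) + 1) *
            apd (fun j => r (k.succAbove j)) (hypercol M k ((b : ℕ) : ZMod (r k))))
              (Finset.mem_univ ⟨b.val, ZMod.val_lt b⟩))
  simp only [ZMod.natCast_zmod_val, le_refl]

lemma apd_pos {s : ℕ} (r : Fin s → ℕ) [∀ k, NeZero (r k)] (M : Idx r → L) (hM : M ≠ 0) :
    1 ≤ apd r M := by
  induction s with
  | zero =>
    have : M finZeroElim ≠ 0 := by
      intro h
      apply hM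
      funext i
      rw [Subsingleton.elim i finZeroElim, h]; rfl
    simp [apd, this]
  | succ s ih =>
    obtain ⟨i, hi⟩ := Function.ne_iff.1 hM
    refine le_trans ?_ (le_apd r M 0 (i 0))
    have : 1 ≤ apd (fun j => r ((0 : Fin (s+1)).succAbove j)) (hypercol M 0 (i 0)) := by
      apply ih
      intro h
      apply hi
      have := congrFun h (fun j => i ((0 : Fin (s+1)).succAbove j))
      simp only [hypercol] at this
      refine Eq.trans ?_ this
      congr 1
      exact (Fin.insertNth_self_removeNth 0 i).symm
    nlinarith

lemma runLen_eq_zero {s : ℕ} {r : Fin (s+1) → ℕ} (M : Idx r → L) (k : Fin (s+1)) (b : ZMod (r k))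
    (h : ∀ c, hypercol M k c ≠ 0) : runLen M k b = 0 := by
  refine card_filter_zero' _ _ ?_
  intro j hj hh
  exact h _ (hh 1 (Finset.mem_Icc.2 ⟨le_rfl, (Finset.mem_Ico.1 hj).1⟩))

lemma apd_const (r : Fin 1 → ℕ) (M : Idx r → L) (hM : ∀ i, M i ≠ 0) :
    apd r M ≤ 1 := by
  rw [apd]
  refine Finset.sup_le fun k _ => Finset.sup_le fun b _ => ?_
  rw [runLen_eq_zero, apd]
  · split_ifs <;> simp
  · intro c h
    exact hM _ (congrFun h finZeroElim)

lemma apd_lower (n r : ℕ) [NeZero n] [NeZero r]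
    [∀ k, NeZero ((Fin.cons n (fun _ : Fin 1 => r) : Fin 2 → ℕ) k)]
    (M : Idx (Fin.cons n (fun _ : Fin 1 => r) : Fin 2 → ℕ) → L)
    (N : Idx (fun _ : Fin 1 => r) → L)
    (h : ∀ b : ZMod r, hypercol (r := (Fin.cons n (fun _ : Fin 1 => r) : Fin 2 → ℕ)) M 1 b = 0 ↔
      hypercol (r := (fun _ : Fin 1 => r)) N 0 b = 0) :
    apd _ N ≤ apd _ M := by
  rw [apd]
  refine Finset.sup_le fun k _ => Finset.sup_le fun b _ => ?_
  obtain rfl : k = 0 := Subsingleton.elim (α := Fin 1) k 0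
  refine le_trans ?_ (le_apd _ M 1 (((b : ℕ) : ZMod r)))
  have hr : runLen N 0 ((b : ℕ) : ZMod r) =
      runLen (r := (Fin.cons n (fun _ : Fin 1 => r) : Fin 2 → ℕ)) M 1 ((b : ℕ) : ZMod r) := by
    unfold runLen
    refine card_filter_congr' _ _ _ fun j => forall_congr' fun m => imp_congr_right fun _ => (h _).symm
  apply Nat.mul_le_mul
  · exact (congrArg (· + 1) hr).le
  · by_cases h0 : hypercol (r := (fun _ : Fin 1 => r)) N 0 ((b : ℕ) : ZMod r) = 0
    · rw [h0, apd_zero]; exact Nat.zero_le _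
    · refine le_trans ?_ (apd_pos _ _ (fun h1 => h0 ((h _).1 h1)))
      rw [apd]
      split_ifs <;> simp

lemma apd_upper (n r : ℕ) [NeZero n] [NeZero r]
    [∀ k, NeZero ((Fin.cons n (fun _ : Fin 1 => r) : Fin 2 → ℕ) k)]
    (M : Idx (Fin.cons n (fun _ : Fin 1 => r) : Fin 2 → ℕ) → L)
    (N : Idx (fun _ : Fin 1 => r) → L)
    (h : ∀ i, M i = N (fun _ => (i 1 : ZMod r))) :
    apd _ M ≤ apd _ N := by
  by_cases hN : N = 0
  · have : M = 0 := by funext i; rw [h, hN]; rfl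
    rw [this, apd_zero]; exact Nat.zero_le _
  have h0 : ∀ b : ZMod n,
      hypercol (r := (Fin.cons n (fun _ : Fin 1 => r) : Fin 2 → ℕ)) M 0 b = N := by
    intro b
    funext i
    refine (h _).trans ?_
    congr 1
    funext k
    obtain rfl : k = 0 := Subsingleton.elim (α := Fin 1) k 0
    rfl
  have h1 : ∀ (b : ZMod r) i,
      hypercol (r := (Fin.cons n (fun _ : Fin 1 => r) : Fin 2 → ℕ)) M 1 b i = N (fun _ => b) := by
    intro b i
    refine (h _).trans ?_
    congr 1
  have h2 : ∀ (b : ZMod r) i, hypercol (r := (fun _ : Fin 1 => r)) N 0 b i = N (fun _ => b) := by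
    intro b i
    show N _ = N _
    congr 1
    funext k
    obtain rfl : k = 0 := Subsingleton.elim (α := Fin 1) k 0
    rfl
  have h3 : ∀ b : ZMod r, hypercol (r := (Fin.cons n (fun _ : Fin 1 => r) : Fin 2 → ℕ)) M 1 b = 0 ↔
      hypercol (r := (fun _ : Fin 1 => r)) N 0 b = 0 := by
    intro b
    constructor
    · intro hb
      funext i
      rw [h2]
      have := congrFun hb (fun _ => 0)
      rw [h1] at this
      exact this
    · intro hb
      funext i
      rw [h1]
      have := congrFun hb finZeroElim
      rw [h2] at this
      exact this
  rw [apd]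
  refine Finset.sup_le fun k _ => Finset.sup_le fun b _ => ?_
  fin_cases k
  · have e1 : runLen (r := (Fin.cons n (fun _ : Fin 1 => r) : Fin 2 → ℕ)) M 0
        ((b : ℕ) : ZMod n) = 0 := by
      apply runLen_eq_zero
      intro c hc
      exact hN ((h0 c).symm.trans hc)
    have e2 := h0 ((b : ℕ) : ZMod n)
    show (runLen (r := (Fin.cons n (fun _ : Fin 1 => r) : Fin 2 → ℕ)) M 0 ((b : ℕ) : ZMod n) + 1) *
      apd (fun _ : Fin 1 => r)
        (hypercol (r := (Fin.cons n (fun _ : Fin 1 => r) : Fin 2 → ℕ)) M 0 ((b : ℕ) : ZMod n)) ≤ _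
    rw [e1, zero_add, one_mul, e2]
  · refine le_trans ?_ (le_apd _ N 0 (((b : ℕ) : ZMod r)))
    have hr : runLen N 0 ((b : ℕ) : ZMod r) =
        runLen (r := (Fin.cons n (fun _ : Fin 1 => r) : Fin 2 → ℕ)) M 1 ((b : ℕ) : ZMod r) := by
      unfold runLen
      refine card_filter_congr' _ _ _ fun j => forall_congr' fun m =>
        imp_congr_right fun _ => (h3 _).symm
    apply Nat.mul_le_mul
    · exact (congrArg (· + 1) hr).ge
    · by_cases hz : hypercol (r := (Fin.cons n (fun _ : Fin 1 => r) : Fin 2 → ℕ)) M 1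
          ((b : ℕ) : ZMod r) = 0
      · refine le_of_eq_of_le ?_ (Nat.zero_le _)
        exact (congrArg (apd _) hz).trans (apd_zero _)
      · have h5 := (h3 _).not.1 hz
        refine le_trans ?_ (apd_pos _ _ h5)
        apply apd_const
        intro i hi
        apply hz
        funext i'
        rw [h1]
        exact ((h1 _ i).symm.trans hi)

lemma fourier_lift (n r : ℕ) [NeZero n] [NeZero r]
    [∀ k, NeZero ((Fin.cons n (fun _ : Fin 1 => r) : Fin 2 → ℕ) k)]
    (β : Fin 2 → L) (e : Idx (fun _ : Fin 1 => r) → F)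
    (j : Idx (Fin.cons n (fun _ : Fin 1 => r) : Fin 2 → ℕ)) :
    fourier β (fun i : Idx (Fin.cons n (fun _ : Fin 1 => r) : Fin 2 → ℕ) =>
      if i 0 = 0 then e (fun _ => (i 1 : ZMod r)) else 0) j =
    fourier (fun _ : Fin 1 => β 1) e (fun _ => (j 1 : ZMod r)) := by
  unfold fourier
  symm
  let c : Idx (fun _ : Fin 1 => r) → Idx (Fin.cons n (fun _ : Fin 1 => r) : Fin 2 → ℕ) :=
    fun i => Fin.cons (α := fun k => ZMod ((Fin.cons n (fun _ : Fin 1 => r) : Fin 2 → ℕ) k))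
      (0 : ZMod n) i
  have c0 : ∀ i, c i 0 = 0 := fun i => rfl
  have c1 : ∀ i, c i 1 = i 0 := fun i => rfl
  have ceta : ∀ i : Idx (fun _ : Fin 1 => r), (fun _ => i 0) = i := fun i => by
    funext k
    obtain rfl : k = 0 := Subsingleton.elim (α := Fin 1) k 0
    rfl
  apply Fintype.sum_of_injective c
  · intro a b hab
    have := congrFun hab 1
    rw [c1, c1] at this
    rw [← ceta a, ← ceta b, this]
  · intro i hi
    have : i 0 ≠ 0 := by
      intro h
      apply hi
      refine ⟨fun _ => i 1, ?_⟩
      funext k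
      fin_cases k
      · exact h.symm
      · rfl
    simp [this]
  · intro i
    have hval : (fun i : Idx (Fin.cons n (fun _ : Fin 1 => r) : Fin 2 → ℕ) =>
      if i 0 = 0 then e (fun _ => (i 1 : ZMod r)) else 0) (c i) = e i :=
      (if_pos (c0 i)).trans (congrArg e (ceta i))
    refine congrArg₂ (· * ·) (congrArg _ hval.symm) ?_
    have h0 : (c i 0).val = 0 := ZMod.val_zero
    have hp : ∏ k, β k ^ ((c i k).val * (j k).val) =
        β 0 ^ ((c i 0).val * (j 0).val) * β 1 ^ ((c i 1).val * (j 1).val) := Fin.prod_univ_two _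
    rw [hp, h0, zero_mul, pow_zero, one_mul]
    exact Fin.prod_univ_one _

lemma fourier_zero {s : ℕ} {r : Fin s → ℕ} [∀ k, NeZero (r k)] (α : Fin s → L) (j : Idx r) :
    fourier α (0 : Idx r → F) j = 0 := by
  simp [fourier_eq]

lemma bdd_dStar {s : ℕ} (r : Fin s → ℕ) [∀ k, NeZero (r k)] (C : Submodule F (Idx r → F)) :
    BddAbove {d | ∃ α : Fin s → L, (∀ k, IsPrimitiveRoot (α k) (r k)) ∧ dStarAlpha r α C = d} := by
  have hfin : {α : Fin s → L | ∀ k, IsPrimitiveRoot (α k) (r k)}.Finite := by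
    apply Set.Finite.pi' (t := fun k => {x : L | IsPrimitiveRoot x (r k)})
    intro k
    refine (primitiveRoots (r k) L).finite_toSet.subset ?_
    intro x hx
    exact (mem_primitiveRoots (NeZero.pos _)).2 hx
  exact (hfin.image (fun α => dStarAlpha r α C)).bddAbove

/-- Let `gcd(q, nr) = 1`, let `C` be a nonzero cyclic code in
`A_q(r)` with `d*(C) = δ > 1`, and `α = (α₁,α₂) ∈ U_n × R(C)`.  Then the abelian
code `C_n` in `A_q(n,r)` with defining set `D_α(C_n) = Z_n × D_{α₂}(C)` satisfies
`d*(C_n) = δ` and `dim_{F_q}(C_n) = n · dim_{F_q}(C)`. -/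
theorem multiply_dimension
    {F : Type*} [Field F] [Fintype F]
    (L : Type*) [Field L] [Algebra F L]
    (n r : ℕ) [NeZero n] [NeZero r]
    (hcop : (Fintype.card F).Coprime (n * r))
    (C : Submodule F (Idx (fun _ : Fin 1 => r) → F))
    (hC : IsAbelianCode C) (hC0 : C ≠ ⊥)
    (hd : 1 < dStarCode (fun _ : Fin 1 => r) L C)
    (α₁ : L) (hα₁ : IsPrimitiveRoot α₁ n)
    (α₂ : L) (hα₂ : IsPrimitiveRoot α₂ r)
    (hopt : dStarAlpha (fun _ : Fin 1 => r) (fun _ => α₂) C =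
      dStarCode (fun _ : Fin 1 => r) L C)
    [inst2 : ∀ k, NeZero ((Fin.cons n (fun _ : Fin 1 => r) : Fin 2 → ℕ) k)]
    (Cn : Submodule F (Idx (Fin.cons n (fun _ : Fin 1 => r) : Fin 2 → ℕ) → F))
    (hCn : IsAbelianCode Cn)
    (hCndef : defSet (Fin.cons n (fun _ : Fin 1 => r))
        (Fin.cons α₁ (fun _ : Fin 1 => α₂) : ∀ _ : Fin 2, L) Cn =
      {i | (fun _ : Fin 1 => (i 1 : ZMod r)) ∈
        defSet (fun _ : Fin 1 => r) (fun _ => α₂) C}) :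
    dStarCode (Fin.cons n (fun _ : Fin 1 => r)) L Cn =
      dStarCode (fun _ : Fin 1 => r) L C ∧
    Module.finrank F Cn = n * Module.finrank F C := by
  have hcn : (Fintype.card F).Coprime n := hcop.coprime_mul_right_right
  have hcr : (Fintype.card F).Coprime r := hcop.coprime_mul_left_right
  set α : Fin 2 → L := (Fin.cons α₁ (fun _ : Fin 1 => α₂) : ∀ _ : Fin 2, L) with hαdef
  have hα : ∀ k, IsPrimitiveRoot (α k) ((Fin.cons n (fun _ : Fin 1 => r) : Fin 2 → ℕ) k) := by
    intro k
    fin_cases k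
    · exact hα₁
    · exact hα₂
  have hα' : ∀ k : Fin 1, IsPrimitiveRoot ((fun _ : Fin 1 => α₂) k) ((fun _ : Fin 1 => r) k) :=
    fun _ => hα₂
  have hN := card_ne hα
  have hN' := card_ne hα'
  -- lifting idempotents
  have hlift : ∀ e ∈ C, e ≠ 0 → conv e e = e → ∃ e' ∈ Cn, e' ≠ 0 ∧ conv e' e' = e' ∧
      ∀ (β : Fin 2 → L) j, fourier β e' j =
        fourier (fun _ : Fin 1 => β 1) e (fun _ => (j 1 : ZMod r)) := by
    intro e he he0 hee
    refine ⟨_, ?_, ?_, ?_, fun β j => fourier_lift n r β e j⟩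
    · apply mem_code_iff hα hN Cn hCn
      intro j hj
      rw [hCndef] at hj
      rw [fourier_lift]
      exact hj e he
    · intro h0
      apply he0
      funext i
      have := congrFun h0 (Fin.cons
        (α := fun k => ZMod ((Fin.cons n (fun _ : Fin 1 => r) : Fin 2 → ℕ) k)) (0 : ZMod n) i)
      have hi : (fun _ => i 0) = i := by
        funext k
        obtain rfl : k = 0 := Subsingleton.elim (α := Fin 1) k 0
        rfl
      rw [← hi]
      exact (if_pos rfl).symm.trans this
    · apply fourier_inj hα hN
      funext j
      have h1 := fourier_conv hα' e e (fun _ => (j 1 : ZMod r))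
      rw [hee] at h1
      rw [fourier_conv hα, fourier_lift]
      exact h1.symm
  have hne : {d | ∃ e, e ∈ C ∧ e ≠ (0 : Idx (fun _ : Fin 1 => r) → F) ∧ conv e e = e ∧
      apd _ (fourier (fun _ => α₂) e) = d}.Nonempty := by
    apply Nat.nonempty_of_pos_sInf
    have : 0 < dStarAlpha (fun _ : Fin 1 => r) (fun _ => α₂) C := by omega
    exact this
  obtain ⟨_, e₀, he₀, he₀0, he₀i, -⟩ := hne
  constructor
  · apply le_antisymm
    · apply csSup_le'
      rintro _ ⟨β, hβ, rfl⟩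
      have hβ' : ∀ k : Fin 1, IsPrimitiveRoot ((fun _ : Fin 1 => β 1) k) ((fun _ : Fin 1 => r) k) :=
        fun _ => hβ 1
      refine le_trans ?_ (le_csSup (bdd_dStar (L := L) _ C) ⟨fun _ => β 1, hβ', rfl⟩)
      have hmem := Nat.sInf_mem (s := {d | ∃ e, e ∈ C ∧ e ≠ (0 : Idx (fun _ : Fin 1 => r) → F) ∧
        conv e e = e ∧ apd _ (fourier (fun _ => β 1) e) = d}) ⟨_, e₀, he₀, he₀0, he₀i, rfl⟩
      obtain ⟨e, he, he0, hee, hd'⟩ := hmem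
      obtain ⟨e', he', he'0, hee', hf⟩ := hlift e he he0 hee
      refine le_trans (Nat.sInf_le ⟨e', he', he'0, hee', rfl⟩) ?_
      refine le_trans (apd_upper n r _ _ (hf β)) ?_
      exact hd'.le
    · rw [← hopt]
      refine le_trans ?_ (le_csSup (bdd_dStar (L := L) _ Cn) ⟨α, hα, rfl⟩)
      obtain ⟨e₁, he₁, he₁0, he₁i, -⟩ := hlift e₀ he₀ he₀0 he₀i
      obtain ⟨e, he, he0, hee, hd'⟩ := Nat.sInf_mem (s := {d | ∃ e, e ∈ Cn ∧
        e ≠ (0 : Idx (Fin.cons n (fun _ : Fin 1 => r) : Fin 2 → ℕ) → F) ∧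
        conv e e = e ∧ apd _ (fourier α e) = d}) ⟨_, e₁, he₁, he₁0, he₁i, rfl⟩
      refine le_trans ?_ hd'.le
      set P : Set (Idx (fun _ : Fin 1 => r)) :=
        {b | ∃ i : Idx (Fin.cons n (fun _ : Fin 1 => r) : Fin 2 → ℕ),
          (fun _ => (i 1 : ZMod r)) = b ∧ fourier α e i ≠ 0} with hPdef
      obtain ⟨e', hee', hf⟩ := exists_idem hα' (fun _ => hcr) P (by
        rintro b ⟨i, rfl, hi⟩
        refine ⟨Fintype.card F • i, rfl, ?_⟩
        rw [fourier_frob hα]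
        exact pow_ne_zero _ hi)
      have he'C : e' ∈ C := by
        apply mem_code_iff hα' hN' C hC
        intro j hj
        rw [hf, if_neg]
        rintro ⟨i, rfl, hi⟩
        apply hi
        have : i ∈ defSet _ α Cn := by rw [hCndef]; exact hj
        exact this e he
      have he'0 : e' ≠ 0 := by
        intro h0
        apply he0
        apply fourier_inj hα hN
        funext j
        have : (fourier α (0 : Idx (Fin.cons n (fun _ : Fin 1 => r) : Fin 2 → ℕ) → F)) j = 0 := by
          simp [fourier_eq]
        rw [this]
        by_contra hj
        have h1 := hf (fun _ => (j 1 : ZMod r))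
        rw [if_pos ⟨j, rfl, hj⟩, h0] at h1
        exact zero_ne_one ((fourier_zero _ _).symm.trans h1)
      refine le_trans (Nat.sInf_le ⟨e', he'C, he'0, hee', rfl⟩) ?_
      apply apd_lower n r
      intro b
      have hb0 : ∀ x : Idx (fun j : Fin 0 => (fun _ : Fin 1 => r) ((0 : Fin 1).succAbove j)),
          (Fin.insertNth (α := fun _ : Fin 1 => ZMod r) 0 b x) = (fun _ => b) := by
        intro x
        funext k
        obtain rfl : k = 0 := Subsingleton.elim (α := Fin 1) k 0
        rfl
      constructor
      · intro h
        funext x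
        refine (congrArg (fourier (fun _ => α₂) e') (hb0 x)).trans ?_
        rw [hf, if_neg]
        · rfl
        rintro ⟨i, hi, hi'⟩
        apply hi'
        have hib : (i 1 : ZMod r) = b := congrFun hi 0
        have h2 := congrFun h (fun k => i ((1 : Fin 2).succAbove k))
        refine Eq.trans ?_ h2
        show fourier α e i = fourier α e _
        congr 1
        funext k
        fin_cases k
        · rfl
        · exact hib
      · intro h
        funext x
        by_contra hx
        have h2 := congrFun h finZeroElim
        have h3 : fourier (fun _ => α₂) e' (fun _ => b) = 0 :=
          (congrArg (fourier (fun _ => α₂) e') (hb0 finZeroElim)).symm.trans h2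
        rw [hf, if_pos] at h3
        · exact one_ne_zero h3
        · exact ⟨_, rfl, hx⟩
  · rw [finrank_code hα hN Cn hCn, finrank_code hα' hN' C hC, hCndef]
    rw [← Nat.card_zmod n, ← Nat.card_prod, Nat.card_zmod]
    refine Nat.card_congr ?_
    refine
      { toFun := fun j => (j.1 0, ⟨fun _ => (j.1 1 : ZMod r), j.2⟩)
        invFun := fun p => ⟨Fin.cons
          (α := fun k => ZMod ((Fin.cons n (fun _ : Fin 1 => r) : Fin 2 → ℕ) k)) p.1 p.2.1, ?_⟩
        left_inv := ?_
        right_inv := ?_ }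
    · intro h
      apply p.2.2
      have h' : (fun _ => p.2.1 0) ∈ defSet (fun _ : Fin 1 => r) (fun _ => α₂) C := h
      convert h' using 1
      funext k
      obtain rfl : k = 0 := Subsingleton.elim (α := Fin 1) k 0
      rfl
    · intro j
      apply Subtype.ext
      funext k
      fin_cases k
      · rfl
      · rfl
    · intro p
      refine Prod.ext rfl (Subtype.ext ?_)
      funext k
      obtain rfl : k = 0 := Subsingleton.elim (α := Fin 1) k 0
      rfl

end AbelianCodes
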